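/- (Theorem 4) Let n ∈ Im(Ca') with g(n,n) = −1 (a point of S^{3,3}), and let X, Y ∈ Im(Ca') with g(X,n) = g(Y,n) = 0 (tangent vectors at n). Define P Z := n×Z and (∇_A P)B := A×B + g(A×B, n)·n. Then the Nijenhuis tensor of the Cayley almost para-complex structure P, given by N_P(X,Y) = 2·((∇_{PX} P)Y − (∇_{PY} P)X + P((∇_Y P)X) − P((∇_X P)Y)), satisfies N_P(X,Y) = −8·n×(X×Y) = −8·P(X×Y). In particular the Cayley almost para-complex structure on S^{3,3} is non-integrable. -/

import Mathlib

-- The split octonion algebra Ca' as pairs of real quaternions.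
noncomputable section

abbrev Ca : Type := Quaternion ℝ × Quaternion ℝ

namespace Ca

/-- Split octonion multiplication: (a,b)·(c,d) = (ac + (conj d)b, da + b(conj c)). -/
def mul (x y : Ca) : Ca :=
  (x.1 * y.1 + star y.2 * x.2, y.2 * x.1 + x.2 * star y.1)

/-- The unit (1,0). -/
def one : Ca := (1, 0)

/-- Conjugation conj(a,b) = (conj a, −b). -/
def conj (x : Ca) : Ca := (star x.1, -x.2)

/-- Real part Re(a,b) = re a. -/
def re (x : Ca) : ℝ := x.1.re

/-- Norm form N(a,b) = ‖a‖² − ‖b‖², of signature (4,4). -/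
def N (x : Ca) : ℝ := Quaternion.normSq x.1 - Quaternion.normSq x.2

/-- The symmetric bilinear form ⟨x,y⟩ = (N(x+y) − N(x) − N(y))/2. -/
def bil (x y : Ca) : ℝ := (N (x + y) - N x - N y) / 2

/-- The vector cross product on Im(Ca'): X × Y := X·Y + g(X,Y)·1. -/
def cross (X Y : Ca) : Ca := mul X Y + bil X Y • one

end Ca

/-- The covariant derivative of the Cayley almost para-complex structure on S^{3,3}:
(∇_A P)B = A×B + g(A×B,n)·n. -/
def nablaP (n A B : Ca) : Ca := Ca.cross A B + Ca.bil (Ca.cross A B) n • n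

/-- The Cayley almost para-complex structure P X = n×X. -/
def Pmap (n X : Ca) : Ca := Ca.cross n X

set_option linter.unusedSimpArgs false
set_option linter.all false

theorem Ca.ext8 {x y : Ca} (h1 : x.1.re = y.1.re) (h2 : x.1.imI = y.1.imI)
    (h3 : x.1.imJ = y.1.imJ) (h4 : x.1.imK = y.1.imK) (h5 : x.2.re = y.2.re)
    (h6 : x.2.imI = y.2.imI) (h7 : x.2.imJ = y.2.imJ) (h8 : x.2.imK = y.2.imK) : x = y :=
  Prod.ext (Quaternion.ext _ _ h1 h2 h3 h4) (Quaternion.ext _ _ h5 h6 h7 h8)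

theorem Ca.bil_eq (x y : Ca) : Ca.bil x y =
    x.1.re * y.1.re + x.1.imI * y.1.imI + x.1.imJ * y.1.imJ + x.1.imK * y.1.imK
    - x.2.re * y.2.re - x.2.imI * y.2.imI - x.2.imJ * y.2.imJ - x.2.imK * y.2.imK := by
  simp only [Ca.bil, Ca.N, Quaternion.normSq_def', Prod.fst_add, Prod.snd_add,
    Quaternion.re_add, Quaternion.imI_add, Quaternion.imJ_add, Quaternion.imK_add]
  ring

theorem Ca.one_re : (1 : Quaternion ℝ).re = 1 := rfl
theorem Ca.one_imI : (1 : Quaternion ℝ).imI = 0 := rfl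
theorem Ca.one_imJ : (1 : Quaternion ℝ).imJ = 0 := rfl
theorem Ca.one_imK : (1 : Quaternion ℝ).imK = 0 := rfl
theorem Ca.zero_re : (0 : Quaternion ℝ).re = 0 := rfl
theorem Ca.zero_imI : (0 : Quaternion ℝ).imI = 0 := rfl
theorem Ca.zero_imJ : (0 : Quaternion ℝ).imJ = 0 := rfl
theorem Ca.zero_imK : (0 : Quaternion ℝ).imK = 0 := rfl

theorem Ca.cross_c1 (A B : Ca) (hA : A.1.re = 0) (hB : B.1.re = 0) :
    (Ca.cross A B).1.re = 0 := by
  simp [Ca.cross, Ca.mul, Ca.one, Ca.bil_eq, hA, hB, Ca.one_re, Ca.one_imI, Ca.one_imJ, Ca.one_imK,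
    Ca.zero_re, Ca.zero_imI, Ca.zero_imJ, Ca.zero_imK]
  try ring

theorem Ca.cross_c2 (A B : Ca) (hA : A.1.re = 0) (hB : B.1.re = 0) :
    (Ca.cross A B).1.imI = A.1.imJ * B.1.imK - A.1.imK * B.1.imJ + B.2.re * A.2.imI - B.2.imI * A.2.re - B.2.imJ * A.2.imK + B.2.imK * A.2.imJ := by
  simp [Ca.cross, Ca.mul, Ca.one, Ca.bil_eq, hA, hB, Ca.one_re, Ca.one_imI, Ca.one_imJ, Ca.one_imK,
    Ca.zero_re, Ca.zero_imI, Ca.zero_imJ, Ca.zero_imK]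
  try ring

theorem Ca.cross_c3 (A B : Ca) (hA : A.1.re = 0) (hB : B.1.re = 0) :
    (Ca.cross A B).1.imJ = -A.1.imI * B.1.imK + A.1.imK * B.1.imI + B.2.re * A.2.imJ + B.2.imI * A.2.imK - B.2.imJ * A.2.re - B.2.imK * A.2.imI := by
  simp [Ca.cross, Ca.mul, Ca.one, Ca.bil_eq, hA, hB, Ca.one_re, Ca.one_imI, Ca.one_imJ, Ca.one_imK,
    Ca.zero_re, Ca.zero_imI, Ca.zero_imJ, Ca.zero_imK]
  try ring

theorem Ca.cross_c4 (A B : Ca) (hA : A.1.re = 0) (hB : B.1.re = 0) :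
    (Ca.cross A B).1.imK = A.1.imI * B.1.imJ - A.1.imJ * B.1.imI + B.2.re * A.2.imK - B.2.imI * A.2.imJ + B.2.imJ * A.2.imI - B.2.imK * A.2.re := by
  simp [Ca.cross, Ca.mul, Ca.one, Ca.bil_eq, hA, hB, Ca.one_re, Ca.one_imI, Ca.one_imJ, Ca.one_imK,
    Ca.zero_re, Ca.zero_imI, Ca.zero_imJ, Ca.zero_imK]
  try ring

theorem Ca.cross_c5 (A B : Ca) (hA : A.1.re = 0) (hB : B.1.re = 0) :
    (Ca.cross A B).2.re = -B.2.imI * A.1.imI - B.2.imJ * A.1.imJ - B.2.imK * A.1.imK + A.2.imI * B.1.imI + A.2.imJ * B.1.imJ + A.2.imK * B.1.imK := by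
  simp [Ca.cross, Ca.mul, Ca.one, Ca.bil_eq, hA, hB, Ca.one_re, Ca.one_imI, Ca.one_imJ, Ca.one_imK,
    Ca.zero_re, Ca.zero_imI, Ca.zero_imJ, Ca.zero_imK]
  try ring

theorem Ca.cross_c6 (A B : Ca) (hA : A.1.re = 0) (hB : B.1.re = 0) :
    (Ca.cross A B).2.imI = B.2.re * A.1.imI + B.2.imJ * A.1.imK - B.2.imK * A.1.imJ - A.2.re * B.1.imI - A.2.imJ * B.1.imK + A.2.imK * B.1.imJ := by
  simp [Ca.cross, Ca.mul, Ca.one, Ca.bil_eq, hA, hB, Ca.one_re, Ca.one_imI, Ca.one_imJ, Ca.one_imK,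
    Ca.zero_re, Ca.zero_imI, Ca.zero_imJ, Ca.zero_imK]
  try ring

theorem Ca.cross_c7 (A B : Ca) (hA : A.1.re = 0) (hB : B.1.re = 0) :
    (Ca.cross A B).2.imJ = B.2.re * A.1.imJ - B.2.imI * A.1.imK + B.2.imK * A.1.imI - A.2.re * B.1.imJ + A.2.imI * B.1.imK - A.2.imK * B.1.imI := by
  simp [Ca.cross, Ca.mul, Ca.one, Ca.bil_eq, hA, hB, Ca.one_re, Ca.one_imI, Ca.one_imJ, Ca.one_imK,
    Ca.zero_re, Ca.zero_imI, Ca.zero_imJ, Ca.zero_imK]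
  try ring

theorem Ca.cross_c8 (A B : Ca) (hA : A.1.re = 0) (hB : B.1.re = 0) :
    (Ca.cross A B).2.imK = B.2.re * A.1.imK + B.2.imI * A.1.imJ - B.2.imJ * A.1.imI - A.2.re * B.1.imK - A.2.imI * B.1.imJ + A.2.imJ * B.1.imI := by
  simp [Ca.cross, Ca.mul, Ca.one, Ca.bil_eq, hA, hB, Ca.one_re, Ca.one_imI, Ca.one_imJ, Ca.one_imK,
    Ca.zero_re, Ca.zero_imI, Ca.zero_imJ, Ca.zero_imK]
  try ring

/-- Double cross product identity. -/
theorem Ca.cross_cross (A B C : Ca) (hA : Ca.re A = 0) (hB : Ca.re B = 0) (hC : Ca.re C = 0) :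
    Ca.cross (Ca.cross A B) C = -Ca.cross A (Ca.cross B C)
      + ((2 * Ca.bil A C) • B - Ca.bil A B • C - Ca.bil B C • A) := by
  simp only [Ca.re] at hA hB hC
  apply Ca.ext8 <;> simp [Ca.bil_eq, Ca.cross_c1, Ca.cross_c2, Ca.cross_c3, Ca.cross_c4, Ca.cross_c5, Ca.cross_c6, Ca.cross_c7, Ca.cross_c8, Ca.zero_re, Ca.zero_imI, Ca.zero_imJ, Ca.zero_imK, hA, hB, hC] <;> try ring

theorem Ca.cross_swap (A B : Ca) (hA : Ca.re A = 0) (hB : Ca.re B = 0) :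
    Ca.cross B A = -Ca.cross A B := by
  simp only [Ca.re] at hA hB
  apply Ca.ext8 <;> simp [Ca.bil_eq, Ca.cross_c1, Ca.cross_c2, Ca.cross_c3, Ca.cross_c4, Ca.cross_c5, Ca.cross_c6, Ca.cross_c7, Ca.cross_c8, Ca.zero_re, Ca.zero_imI, Ca.zero_imJ, Ca.zero_imK, hA, hB] <;> try ring

theorem Ca.cross_self (A : Ca) (hA : Ca.re A = 0) : Ca.cross A A = 0 := by
  simp only [Ca.re] at hA
  apply Ca.ext8 <;> simp [Ca.bil_eq, Ca.cross_c1, Ca.cross_c2, Ca.cross_c3, Ca.cross_c4, Ca.cross_c5, Ca.cross_c6, Ca.cross_c7, Ca.cross_c8, Ca.zero_re, Ca.zero_imI, Ca.zero_imJ, Ca.zero_imK, hA] <;> try ring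

theorem Ca.re_cross (A B : Ca) (hA : Ca.re A = 0) (hB : Ca.re B = 0) :
    Ca.re (Ca.cross A B) = 0 := by
  simp only [Ca.re] at hA hB
  simp [Ca.re, Ca.cross_c1, hA, hB]

theorem Ca.bil_cross_left (A B : Ca) (hA : Ca.re A = 0) (hB : Ca.re B = 0) :
    Ca.bil (Ca.cross A B) A = 0 := by
  simp only [Ca.re] at hA hB
  simp [Ca.bil_eq, Ca.cross_c1, Ca.cross_c2, Ca.cross_c3, Ca.cross_c4, Ca.cross_c5, Ca.cross_c6, Ca.cross_c7, Ca.cross_c8, Ca.zero_re, Ca.zero_imI, Ca.zero_imJ, Ca.zero_imK, hA, hB]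
  ring

theorem Ca.cross_add_smul (A B C : Ca) (r : ℝ) :
    Ca.cross A (B + r • C) = Ca.cross A B + r • Ca.cross A C := by
  apply Ca.ext8 <;> simp [Ca.cross, Ca.mul, Ca.one, Ca.bil_eq] <;> ring

theorem Ca.cross_neg (A B : Ca) : Ca.cross A (-B) = -Ca.cross A B := by
  apply Ca.ext8 <;> simp [Ca.cross, Ca.mul, Ca.one, Ca.bil_eq] <;> ring

theorem Ca.bil_add_smul (A B C : Ca) (r : ℝ) :
    Ca.bil (B + r • C) A = Ca.bil B A + r * Ca.bil C A := by
  simp [Ca.bil_eq]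
  ring

theorem Ca.bil_comm (A B : Ca) : Ca.bil A B = Ca.bil B A := by
  simp only [Ca.bil_eq]
  ring

theorem Ca.bil_neg (A B : Ca) : Ca.bil (-A) B = -Ca.bil A B := by
  simp [Ca.bil_eq]
  ring

/-- For tangent vectors, `(∇_{PX} P) Y = - n × (X × Y)`. -/
theorem nablaP_Pmap (n X Y : Ca) (hn : Ca.re n = 0) (hnn : Ca.bil n n = -1)
    (hX : Ca.re X = 0) (hY : Ca.re Y = 0)
    (hXn : Ca.bil X n = 0) (hYn : Ca.bil Y n = 0) :
    nablaP n (Pmap n X) Y = -Ca.cross n (Ca.cross X Y) := by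
  have h : Ca.cross (Ca.cross n X) Y
      = -Ca.cross n (Ca.cross X Y) + (-Ca.bil X Y) • n := by
    rw [Ca.cross_cross n X Y hn hX hY, Ca.bil_comm n Y, Ca.bil_comm n X, hXn, hYn]
    module
  rw [nablaP, Pmap, h, Ca.bil_add_smul, Ca.bil_neg,
    Ca.bil_cross_left n _ hn (Ca.re_cross X Y hX hY), hnn]
  module

theorem Pmap_nablaP (n X Y : Ca) (hn : Ca.re n = 0) :
    Pmap n (nablaP n X Y) = Ca.cross n (Ca.cross X Y) := by
  rw [nablaP, Pmap, Ca.cross_add_smul, Ca.cross_self n hn, smul_zero, add_zero]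

/-- Theorem 4: the Nijenhuis tensor of the Cayley almost para-complex structure P on
S^{3,3} satisfies N_P(X,Y) = −8·n×(X×Y) = −8·P(X×Y); in particular it is nonzero
whenever X×Y ≠ 0, so P is non-integrable. -/
theorem nijenhuis_P (n X Y : Ca) (hn : Ca.re n = 0) (hnn : Ca.bil n n = -1)
    (hX : Ca.re X = 0) (hY : Ca.re Y = 0)
    (hXn : Ca.bil X n = 0) (hYn : Ca.bil Y n = 0) :
    (2 : ℝ) • (nablaP n (Pmap n X) Y - nablaP n (Pmap n Y) X
        + Pmap n (nablaP n Y X) - Pmap n (nablaP n X Y)) =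
      (-8 : ℝ) • Ca.cross n (Ca.cross X Y) ∧
    (-8 : ℝ) • Ca.cross n (Ca.cross X Y) = (-8 : ℝ) • Pmap n (Ca.cross X Y) := by
  refine ⟨?_, rfl⟩
  rw [nablaP_Pmap n X Y hn hnn hX hY hXn hYn, nablaP_Pmap n Y X hn hnn hY hX hYn hXn,
    Pmap_nablaP n Y X hn, Pmap_nablaP n X Y hn, Ca.cross_swap X Y hX hY, Ca.cross_neg]
  module
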